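/- The rectangular quadrant 𝐐 = 𝕃≥0 × 𝕃≥0 (with the product topology) and the rhombic quadrant Q̄ = {(x, y) ∈ 𝕃² : −y ≤ x ≤ y} (with the subspace topology inherited from 𝕃 × 𝕃) are not homeomorphic. -/

import Mathlib

noncomputable section

open Set Topology Filter

universe u

/-! ### The long ray and the long line -/

/-- The first uncountable ordinal `ω₁`, viewed as the linearly ordered set of all
countable ordinals. -/
def Omega1 : Type 1 := {o : Ordinal.{0} // o < (Cardinal.aleph 1).ord}

instance : LinearOrder Omega1 :=
  inferInstanceAs (LinearOrder {o : Ordinal.{0} // o < (Cardinal.aleph 1).ord})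

/-- `ω₁` carries the order topology. -/
instance : TopologicalSpace Omega1 := Preorder.topology Omega1

instance : OrderTopology Omega1 := ⟨rfl⟩

/-- The underlying countable ordinal of an element of `ω₁`. -/
def Omega1.toOrdinal : Omega1 → Ordinal.{0} := Subtype.val

/-- The closed long ray `𝕃≥0`: the set `ω₁ × [0,1)` with the lexicographic order and the
order topology. -/
def ClosedLongRay : Type 1 := Omega1 ×ₗ (Set.Ico (0:ℝ) 1)

instance : LinearOrder ClosedLongRay :=
  inferInstanceAs (LinearOrder (Omega1 ×ₗ (Set.Ico (0:ℝ) 1)))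

instance : TopologicalSpace ClosedLongRay := Preorder.topology ClosedLongRay

instance : OrderTopology ClosedLongRay := ⟨rfl⟩

/-- The long ray `𝕃₊`: the closed long ray with its least element removed, with the
subspace topology (an element is non-minimal iff something is below it). -/
def LongRay : Type 1 := {x : ClosedLongRay // ∃ y, y < x}

instance : LinearOrder LongRay :=
  inferInstanceAs (LinearOrder {x : ClosedLongRay // ∃ y, y < x})

instance : TopologicalSpace LongRay :=
  inferInstanceAs (TopologicalSpace {x : ClosedLongRay // ∃ y, y < x})

/-- The inclusion of the long ray into the closed long ray. -/
def LongRay.toCLR : LongRay → ClosedLongRay := Subtype.val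

/-- The long line `𝕃`: an order-reversed copy of `𝕃₊` placed below the closed long ray
`𝕃≥0`, with the order topology. -/
def LongLine : Type 1 := (OrderDual LongRay) ⊕ₗ ClosedLongRay

instance : LinearOrder LongLine :=
  inferInstanceAs (LinearOrder ((OrderDual LongRay) ⊕ₗ ClosedLongRay))

instance : TopologicalSpace LongLine := Preorder.topology LongLine

instance : OrderTopology LongLine := ⟨rfl⟩

/-- The identification of `𝕃₊` with the set of positive elements of `𝕃`. -/
def LongRay.inL (a : LongRay) : LongLine := toLex (Sum.inr a.toCLR)

/-- The natural order-reversing involution `x ↦ -x` of the long line, exchanging the two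
copies of `𝕃₊` and fixing the least element `0` of `𝕃≥0`. -/
noncomputable def LongLine.neg (x : LongLine) : LongLine :=
  match ofLex x with
  | Sum.inl a => toLex (Sum.inr (OrderDual.ofDual a).toCLR)
  | Sum.inr b =>
      @dite _ (∃ y, y < b) (Classical.dec _)
        (fun h => toLex (Sum.inl (OrderDual.toDual (⟨b, h⟩ : LongRay))))
        (fun _ => x)

/-- A subset of the long ray is a *club* if it is closed (in the topology of `𝕃₊`) and
unbounded (i.e. cofinal). -/
def ClubInLongRay (C : Set LongRay) : Prop :=
  IsClosed C ∧ ∀ β : LongRay, ∃ α ∈ C, β ≤ α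

/-- A topological space `X` is *squat* if every continuous map `𝕃₊ → X` is eventually
constant. -/
def Squat (X : Type*) [TopologicalSpace X] : Prop :=
  ∀ f : LongRay → X, Continuous f → ∃ (β : LongRay) (x : X), ∀ α, β ≤ α → f α = x

/-! ### Manifolds and foliations -/

/-- A (topological) `n`-manifold: a nonempty Hausdorff space in which every point has an
open neighbourhood homeomorphic to `ℝⁿ`. -/
def IsTopManifold (M : Type u) [TopologicalSpace M] (n : ℕ) : Prop :=
  Nonempty M ∧ T2Space M ∧
    ∀ x : M, ∃ U : Set M, x ∈ U ∧ IsOpen U ∧ Nonempty (U ≃ₜ (Fin n → ℝ))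

/-- A foliation of dimension `p` and codimension `q` on a space `M`: a family of charts
`φᵢ : Uᵢ ≃ₜ ℝᵖ × ℝ^q` on open sets covering `M` such that all coordinate transformations
have the form `(x, y) ↦ (g (x, y), h y)`, i.e. the last `q` coordinates of the image
depend only on the last `q` coordinates of the argument. -/
structure Foliation (M : Type u) [TopologicalSpace M] (p q : ℕ) where
  /-- index type of the atlas -/
  ι : Type u
  /-- chart domains -/
  U : ι → Set M
  /-- the charts -/
  chart : (i : ι) → ((U i) ≃ₜ ((Fin p → ℝ) × (Fin q → ℝ)))
  isOpen : ∀ i, IsOpen (U i)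
  covers : ∀ x : M, ∃ i, x ∈ U i
  compat : ∀ i j (x y : M) (hxi : x ∈ U i) (hxj : x ∈ U j) (hyi : y ∈ U i) (hyj : y ∈ U j),
    (chart i ⟨x, hxi⟩).2 = (chart i ⟨y, hyi⟩).2 → (chart j ⟨x, hxj⟩).2 = (chart j ⟨y, hyj⟩).2

namespace Foliation

variable {M : Type u} [TopologicalSpace M] {p q : ℕ}

/-- The set `φᵢ⁻¹ (ℝᵖ × {y})` in the chart domain `Uᵢ`. -/
def plaqueFibre (F : Foliation M p q) (i : F.ι) (y : Fin q → ℝ) : Set M :=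
  {w : M | ∃ hw : w ∈ F.U i, (F.chart i ⟨w, hw⟩).2 = y}

/-- A *plaque* of the foliation: a connected component of a set of the form
`φᵢ⁻¹ (ℝᵖ × {y})`. -/
def IsPlaque (F : Foliation M p q) (P : Set M) : Prop :=
  ∃ (i : F.ι) (y : Fin q → ℝ) (z : M), z ∈ F.plaqueFibre i y ∧
    P = connectedComponentIn (F.plaqueFibre i y) z

/-- Two points lie in a common plaque. -/
def samePlaque (F : Foliation M p q) (x y : M) : Prop :=
  ∃ P, F.IsPlaque P ∧ x ∈ P ∧ y ∈ P

/-- The leaf relation: the smallest equivalence relation relating any two points that lie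
in a common plaque. -/
def leafRel (F : Foliation M p q) : M → M → Prop := Relation.EqvGen F.samePlaque

/-- The *leaves* of the foliation: equivalence classes of the leaf relation. -/
def IsLeaf (F : Foliation M p q) (L : Set M) : Prop :=
  ∃ x : M, L = {y | F.leafRel x y}

/-- The *leaf topology* on a leaf (or any subset) `L`: the topology generated by the
plaques contained in `L`. -/
def leafTopology (F : Foliation M p q) (L : Set M) : TopologicalSpace L :=
  TopologicalSpace.generateFrom
    {s : Set L | ∃ P, F.IsPlaque P ∧ P ⊆ L ∧ s = Subtype.val ⁻¹' P}

/-- A leaf is *long* if it is not metrisable in its leaf topology. -/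
def IsLongLeaf (F : Foliation M p q) (L : Set M) : Prop :=
  F.IsLeaf L ∧ ¬ @TopologicalSpace.MetrizableSpace L (F.leafTopology L)

/-- A subset of `M` is *saturated* by the foliation if it is a union of leaves. -/
def Saturated (F : Foliation M p q) (S : Set M) : Prop :=
  ∀ x ∈ S, ∀ y, F.leafRel x y → y ∈ S

end Foliation

section GenericLongOrder

set_option linter.unusedSectionVars false

variable {K : Type*} [LinearOrder K] [TopologicalSpace K] [OrderTopology K] [NoMaxOrder K]
  [DenselyOrdered K] [OrderBot K] [FirstCountableTopology K] [CompactIccSpace K]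

/-- Countable families are bounded, and bounded sets have suprema. -/
structure LongLike (K : Type*) [LinearOrder K] : Prop where
  bdd : ∀ u : ℕ → K, BddAbove (range u)
  lub : ∀ s : Set K, s.Nonempty → BddAbove s → ∃ a, IsLUB s a

theorem LongLike.seq (hK : LongLike K) (R : K → K → Prop) (hR : ∀ s, ∃ t, s ≤ t ∧ R s t) (b : K) :
    ∃ (u : ℕ → K) (t : K), b ≤ t ∧ (∀ n, u n ≤ u (n+1)) ∧ (∀ n, R (u n) (u (n+1))) ∧
      Tendsto u atTop (𝓝 t) := by
  choose g hg1 hg2 using hR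
  let u : ℕ → K := fun n => g^[n] b
  have hs : ∀ n, u (n+1) = g (u n) := fun n => Function.iterate_succ_apply' g n b
  have hm : ∀ n, u n ≤ u (n+1) := fun n => by rw [hs]; exact hg1 _
  obtain ⟨t, ht⟩ := hK.lub (range u) ⟨_, mem_range_self 0⟩ (hK.bdd u)
  refine ⟨u, t, ht.1 (mem_range_self 0), hm, fun n => by rw [hs]; exact hg2 _, ?_⟩
  exact tendsto_atTop_isLUB (monotone_nat_of_le_succ hm) ht

theorem LongLike.club_inter (hK : LongLike K) {A B : Set K} (hA : IsClosed A) (hB : IsClosed B)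
    (hA' : ∃ᶠ t in atTop, t ∈ A) (hB' : ∃ᶠ t in atTop, t ∈ B) :
    ∃ᶠ t in atTop, t ∈ A ∩ B := by
  rw [frequently_atTop] at *
  intro b
  obtain ⟨u, t, hbt, hm, hR, hu⟩ := hK.seq
    (fun s t => ∃ x ∈ A, ∃ y ∈ B, s ≤ x ∧ x ≤ t ∧ s ≤ y ∧ y ≤ t) (fun s => by
      obtain ⟨x, hx, hxA⟩ := hA' s
      obtain ⟨y, hy, hyB⟩ := hB' s
      exact ⟨max x y, hx.trans (le_max_left _ _), x, hxA, y, hyB, hx, le_max_left _ _, hy,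
        le_max_right _ _⟩) b
  choose x hx y hy h1 h2 h3 h4 using hR
  have hu' := (tendsto_add_atTop_iff_nat 1).2 hu
  have hxt : Tendsto x atTop (𝓝 t) := tendsto_of_tendsto_of_tendsto_of_le_of_le hu hu' h1 h2
  have hyt : Tendsto y atTop (𝓝 t) := tendsto_of_tendsto_of_tendsto_of_le_of_le hu hu' h3 h4
  exact ⟨t, hbt, hA.mem_of_tendsto hxt (Eventually.of_forall hx),
    hB.mem_of_tendsto hyt (Eventually.of_forall hy)⟩

theorem LongLike.fix (hK : LongLike K) {f : K → K} (hf : Continuous f)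
    (h : ∀ m, ∃ᶠ t in atTop, m ≤ f t) : ∃ᶠ t in atTop, f t = t := by
  simp only [frequently_atTop] at *
  intro b
  obtain ⟨u, t, hbt, hm, hR, hu⟩ := hK.seq
    (fun s t => ∃ x, s ≤ x ∧ x ≤ t ∧ s ≤ f x ∧ f s ≤ t) (fun s => by
      obtain ⟨x, hx, hxA⟩ := h s s
      exact ⟨max x (f s), hx.trans (le_max_left _ _), x, hx, le_max_left _ _, hxA,
        le_max_right _ _⟩) b
  choose x h1 h2 h3 h4 using hR
  have hu' := (tendsto_add_atTop_iff_nat 1).2 hu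
  have hxt : Tendsto x atTop (𝓝 t) := tendsto_of_tendsto_of_tendsto_of_le_of_le hu hu' h1 h2
  refine ⟨t, hbt, le_antisymm ?_ ?_⟩
  · exact le_of_tendsto_of_tendsto ((hf.tendsto t).comp hu) hu' (Eventually.of_forall h4)
  · exact le_of_tendsto_of_tendsto hu ((hf.tendsto t).comp hxt) (Eventually.of_forall h3)

theorem LongLike.ev_all (hK : LongLike K) {p : ℕ → K → Prop} (h : ∀ n, ∀ᶠ t in atTop, p n t) :
    ∀ᶠ t in atTop, ∀ n, p n t := by
  simp only [eventually_atTop] at *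
  choose b hb using h
  obtain ⟨B, hB⟩ := hK.bdd b
  exact ⟨B, fun t ht n => hb n t ((hB (mem_range_self n)).trans ht)⟩

theorem LongLike.ev_const (hK : LongLike K) {f : K → K} (hf : Continuous f) {m : K}
    (h : ∀ᶠ t in atTop, f t ≤ m) : ∃ c, ∀ᶠ t in atTop, f t = c := by
  have hle : map f atTop ≤ 𝓟 (Icc (⊥ : K) m) := by
    rw [le_principal_iff]
    exact h.mono fun t ht => ⟨bot_le, ht⟩
  obtain ⟨c, -, hc⟩ := isCompact_Icc hle
  have hT : Tendsto f atTop (𝓝 c) := by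
    rw [tendsto_def]
    intro U hU
    obtain ⟨V, hV, hVc, hVU⟩ := exists_mem_nhds_isClosed_subset (interior_mem_nhds.2 hU)
    by_contra hn
    have f1 : ∃ᶠ t in atTop, t ∈ f ⁻¹' V :=
      (frequently_map (m := f) (f := atTop) (P := fun y => y ∈ V)).1
        (clusterPt_iff_frequently.1 hc V hV)
    have f2 : ∃ᶠ t in atTop, t ∈ f ⁻¹' (interior U)ᶜ := by
      intro hev
      apply hn
      filter_upwards [hev] with t ht
      have h3 : f t ∈ interior U := not_not.1 ht
      exact (interior_subset h3 : f t ∈ U)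
    obtain ⟨t, ht1, ht2⟩ := (hK.club_inter (hVc.preimage hf)
      (isOpen_interior.isClosed_compl.preimage hf) f1 f2).exists
    exact ht2 (hVU ht1)
  obtain ⟨B, hB⟩ := (𝓝 c).exists_antitone_basis
  refine ⟨c, (hK.ev_all fun n => hT.eventually (hB.mem n)).mono fun t ht => ?_⟩
  by_contra hne
  obtain ⟨n, -, hn⟩ := hB.1.mem_iff.1 (isOpen_ne.mem_nhds (Ne.symm hne) : {y | y ≠ f t} ∈ 𝓝 c)
  exact hn (ht n) rfl

theorem LongLike.dich (hK : LongLike K) {f : K → K} (hf : Continuous f) :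
    (∃ c, ∀ᶠ t in atTop, f t = c) ∨ ∃ᶠ t in atTop, f t = t := by
  by_cases h : ∃ m, ∀ᶠ t in atTop, f t ≤ m
  · exact Or.inl (hK.ev_const hf h.choose_spec)
  · push Not at h
    exact Or.inr (hK.fix hf fun m => (h m).mono fun t ht => ht.le)

theorem not_ev_and_freq_fix {f : K → K} {c : K} (h : ∀ᶠ t in atTop, f t = c)
    (h' : ∃ᶠ t in atTop, f t = t) : False := by
  obtain ⟨t, h1, h2, h3⟩ := (h'.and_eventually (h.and (eventually_gt_atTop c))).exists
  exact h3.ne (h2.symm.trans h1)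

/-- The core argument. -/
theorem LongLike.core (hK : LongLike K) {R : Type*} [TopologicalSpace R] (h : (K × K) ≃ₜ R)
    (P N Y d : _) (hP : Continuous (P : R → K)) (hN : Continuous (N : R → K))
    (hY : Continuous (Y : R → K)) (hd : Continuous (d : K → R))
    (inj : ∀ z w, P z = P w → N z = N w → Y z = Y w → z = w)
    (hPY : ∀ z, P z ≤ Y z) (hNY : ∀ z, N z ≤ Y z)
    (hdP : ∀ t, P (d t) = t) (hdY : ∀ t, Y (d t) = t)
    (hd' : ∀ z, P z = Y z → z = d (Y z)) :
    ∃ᶠ t in atTop, (h.symm (d t)).2 = t := by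
  have hcA : Continuous fun t => (h.symm (d t)).1 := by fun_prop
  have hcB : Continuous fun t => (h.symm (d t)).2 := by fun_prop
  refine (hK.dich hcB).resolve_left ?_
  rintro ⟨c, hc⟩
  have hA : ∃ᶠ t in atTop, (h.symm (d t)).1 = t := by
    refine (hK.dich hcA).resolve_left ?_
    rintro ⟨a, ha⟩
    obtain ⟨t0, ht0⟩ := eventually_atTop.1 (ha.and hc)
    obtain ⟨t1, ht1⟩ := exists_gt t0
    have e : h.symm (d t0) = h.symm (d t1) := Prod.ext
      ((ht0 t0 le_rfl).1.trans (ht0 t1 ht1.le).1.symm)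
      ((ht0 t0 le_rfl).2.trans (ht0 t1 ht1.le).2.symm)
    have e2 := congrArg Y (h.symm.injective e)
    rw [hdY, hdY] at e2
    exact ht1.ne e2
  have key : ∀ t, (h.symm (d t)).1 = t → (h.symm (d t)).2 = c → h (t, c) = d t := by
    intro t h1 h2
    rw [← h.apply_symm_apply (d t)]
    exact congrArg h (Prod.ext h1.symm h2.symm)
  obtain ⟨cs, hcs⟩ := exists_seq_tendsto (𝓝[≠] c)
  have hcs1 : Tendsto cs atTop (𝓝 c) := hcs.mono_right nhdsWithin_le_nhds
  have hcs2 : ∀ᶠ n in atTop, cs n ≠ c := hcs.eventually self_mem_nhdsWithin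
  -- off `c` the first coordinate is eventually constant
  have hPc : ∀ c', c' ≠ c → ∃ p, ∀ᶠ t in atTop, P (h (t, c')) = p := by
    intro c' hc'
    have hYf : Continuous fun t => Y (h (t, c')) := by fun_prop
    have hPf : Continuous fun t => P (h (t, c')) := by fun_prop
    have hNf : Continuous fun t => N (h (t, c')) := by fun_prop
    have hYu : ∃ᶠ t in atTop, Y (h (t, c')) = t := by
      refine (hK.dich hYf).resolve_left ?_
      rintro ⟨y, hy⟩
      obtain ⟨p, hp⟩ := hK.ev_const hPf (m := y) (hy.mono fun t ht => ht ▸ hPY _)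
      obtain ⟨q, hq⟩ := hK.ev_const hNf (m := y) (hy.mono fun t ht => ht ▸ hNY _)
      obtain ⟨t0, ht0⟩ := eventually_atTop.1 (hy.and (hp.and hq))
      obtain ⟨t1, ht1⟩ := exists_gt t0
      obtain ⟨a1, a2, a3⟩ := ht0 t0 le_rfl
      obtain ⟨b1, b2, b3⟩ := ht0 t1 ht1.le
      have e := h.injective (inj _ _ (a2.trans b2.symm) (a3.trans b3.symm) (a1.trans b1.symm))
      exact ht1.ne (congrArg Prod.fst e)
    refine (hK.dich hPf).resolve_right ?_
    intro hPu
    have c1 := hK.club_inter (isClosed_eq hYf continuous_id) (isClosed_eq hPf continuous_id) hYu hPu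
    have c2 := hK.club_inter ((isClosed_eq hYf continuous_id).inter
      (isClosed_eq hPf continuous_id)) (isClosed_eq hcA continuous_id) c1 hA
    obtain ⟨t, ⟨⟨h1, h2⟩, h3⟩, h4⟩ := (c2.and_eventually hc).exists
    change _ = t at h1 h2 h3
    have e := hd' (h (t, c')) (h2.trans h1.symm)
    rw [h1, ← key t h3 h4] at e
    exact hc' (congrArg Prod.snd (h.injective e))
  have hall : ∃ p : ℕ → K, ∀ n, cs n ≠ c → ∀ᶠ t in atTop, P (h (t, cs n)) = p n := by
    choose! p hp using hPc
    exact ⟨fun n => p (cs n), fun n hn => hp _ hn⟩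
  obtain ⟨p, hp⟩ := hall
  have hev : ∀ᶠ t in atTop, ∀ n, cs n ≠ c → P (h (t, cs n)) = p n :=
    hK.ev_all fun n => by
      by_cases hn : cs n = c
      · exact Eventually.of_forall fun t h => absurd hn h
      · exact (hp n hn).mono fun t ht _ => ht
  have hlim : ∃ᶠ t in atTop, Tendsto p atTop (𝓝 t) := by
    refine (hA.and_eventually (hc.and hev)).mono ?_
    rintro t ⟨h1, h2, h3⟩
    have e := key t h1 h2
    have l : Tendsto (fun n => P (h (t, cs n))) atTop (𝓝 (P (h (t, c)))) :=
      ((by fun_prop : Continuous fun x => P (h (t, x))).tendsto c).comp hcs1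
    rw [e, hdP] at l
    exact l.congr' (hcs2.mono fun n hn => h3 n hn)
  obtain ⟨t, ht⟩ := hlim.exists
  obtain ⟨t', ht', h2⟩ := (hlim.and_eventually (eventually_gt_atTop t)).exists
  exact h2.ne (tendsto_nhds_unique ht ht')

theorem LongLike.main (hK : LongLike K) {R : Type*} [TopologicalSpace R] (h : (K × K) ≃ₜ R)
    (P N Y d e : _) (hP : Continuous (P : R → K)) (hN : Continuous (N : R → K))
    (hY : Continuous (Y : R → K)) (hd : Continuous (d : K → R)) (he : Continuous (e : K → R))
    (inj : ∀ z w, P z = P w → N z = N w → Y z = Y w → z = w)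
    (hPY : ∀ z, P z ≤ Y z) (hNY : ∀ z, N z ≤ Y z)
    (hdP : ∀ t, P (d t) = t) (hdY : ∀ t, Y (d t) = t)
    (heN : ∀ t, N (e t) = t) (heY : ∀ t, Y (e t) = t) (heP : ∀ t, P (e t) = ⊥)
    (hd' : ∀ z, P z = Y z → z = d (Y z)) (he' : ∀ z, N z = Y z → z = e (Y z)) : False := by
  have b1 := hK.core h P N Y d hP hN hY hd inj hPY hNY hdP hdY hd'
  have b2 := hK.core h N P Y e hN hP hY he (fun z w a b c => inj z w b a c) hNY hPY heN heY he'
  have a1 := hK.core ((Homeomorph.prodComm K K).trans h) P N Y d hP hN hY hd inj hPY hNY hdP hdY hd'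
  have a2 := hK.core ((Homeomorph.prodComm K K).trans h) N P Y e hN hP hY he
    (fun z w a b c => inj z w b a c) hNY hPY heN heY he'
  replace a1 : ∃ᶠ t in atTop, (h.symm (d t)).1 = t := a1
  replace a2 : ∃ᶠ t in atTop, (h.symm (e t)).1 = t := a2
  have k1 : IsClosed {t | (h.symm (d t)).1 = t} := isClosed_eq (by fun_prop) continuous_id
  have k2 : IsClosed {t | (h.symm (d t)).2 = t} := isClosed_eq (by fun_prop) continuous_id
  have k3 : IsClosed {t | (h.symm (e t)).1 = t} := isClosed_eq (by fun_prop) continuous_id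
  have k4 : IsClosed {t | (h.symm (e t)).2 = t} := isClosed_eq (by fun_prop) continuous_id
  have c := hK.club_inter (k1.inter k2) (k3.inter k4) (hK.club_inter k1 k2 a1 b1)
    (hK.club_inter k3 k4 a2 b2)
  obtain ⟨t, ⟨⟨h1, h2⟩, h3, h4⟩, h5⟩ := (c.and_eventually (eventually_gt_atTop ⊥)).exists
  have : h.symm (d t) = h.symm (e t) := Prod.ext (h1.trans h3.symm) (h2.trans h4.symm)
  have := congrArg P (h.symm.injective this)
  rw [hdP, heP] at this
  exact h5.ne' this

end GenericLongOrder
section ConcreteLong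

instance : WellFoundedLT Omega1 :=
  inferInstanceAs (WellFoundedLT {o : Ordinal.{0} // o < (Cardinal.aleph 1).ord})

theorem Omega1.bdd (u : ℕ → Omega1) : ∃ b : Omega1, ∀ n, u n ≤ b := by
  have h : ∀ n, (u n).1 < Ordinal.omega 1 := fun n => by
    exact lt_of_lt_of_eq (u n).2 (Cardinal.ord_aleph 1)
  have h2 := Ordinal.iSup_lt_omega_one h
  rw [← Cardinal.ord_aleph] at h2
  exact ⟨⟨_, h2⟩, fun n => Ordinal.le_iSup (fun n => (u n).1) n⟩

instance : NoMaxOrder Omega1 := ⟨fun a => by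
  have h : Order.succ a.1 < (Cardinal.aleph 1).ord :=
    (Cardinal.isSuccLimit_ord (Cardinal.aleph0_le_aleph 1)).succ_lt a.2
  exact ⟨⟨_, h⟩, (Order.lt_succ a.1 : a.1 < _)⟩⟩

theorem Omega1.countable_Iic (a : Omega1) : (Iic a).Countable := by
  obtain ⟨b, hb⟩ := exists_gt a
  have h : (Iio b.1).Countable := by
    rw [← Cardinal.le_aleph0_iff_set_countable, Cardinal.mk_Iio_ordinal]
    have := b.2
    rw [Cardinal.lt_ord] at this
    have h2 : b.1.card ≤ Cardinal.aleph0 := by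
      rw [← Order.lt_succ_iff, Cardinal.succ_aleph0]
      exact this
    exact (Cardinal.lift_le.2 h2).trans_eq Cardinal.lift_aleph0
  refine (h.preimage Subtype.val_injective).mono ?_
  intro x hx
  exact (lt_of_le_of_lt hx hb : x < b)

instance : Nonempty Omega1 :=
  ⟨⟨0, (Cardinal.isSuccLimit_ord (Cardinal.aleph0_le_aleph 1)).bot_lt⟩⟩

/-- A point of the long ray. -/
def ClosedLongRay.mk (a : Omega1) (r : Set.Ico (0:ℝ) 1) : ClosedLongRay := toLex (a, r)

namespace ClosedLongRay

theorem mk_lt {a b r s} : mk a r < mk b s ↔ a < b ∨ a = b ∧ r < s := Prod.Lex.toLex_lt_toLex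

theorem mk_le {a b r s} : mk a r ≤ mk b s ↔ a < b ∨ a = b ∧ r ≤ s := Prod.Lex.toLex_le_toLex

theorem exists_mk (x : ClosedLongRay) : ∃ a r, x = mk a r := ⟨(ofLex x).1, (ofLex x).2, rfl⟩

/-- zero of `[0,1)`. -/
def z01 : Set.Ico (0:ℝ) 1 := ⟨0, by norm_num⟩

theorem exists_rat_gt (r : Set.Ico (0:ℝ) 1) {y : ℝ} (hy : r.1 < y) (hy1 : y ≤ 1) :
    ∃ q : Set.Ico (0:ℝ) 1, r < q ∧ q.1 < y ∧ ∃ p : ℚ, q.1 = p := by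
  obtain ⟨p, h1, h2⟩ := exists_rat_btwn hy
  exact ⟨⟨p, r.2.1.trans h1.le, h2.trans_le hy1⟩, h1, h2, p, rfl⟩

theorem exists_rat_between {x y : ClosedLongRay} (h : x < y) :
    ∃ (a : Omega1) (q : Set.Ico (0:ℝ) 1), (∃ p : ℚ, q.1 = p) ∧ x < mk a q ∧ mk a q < y ∧
      a ≤ (ofLex y).1 := by
  obtain ⟨a, r, rfl⟩ := exists_mk x
  obtain ⟨b, s, rfl⟩ := exists_mk y
  rcases mk_lt.1 h with h | ⟨rfl, hrs⟩
  · obtain ⟨q, h1, h2, hq⟩ := exists_rat_gt r r.2.2 le_rfl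
    exact ⟨a, q, hq, mk_lt.2 (Or.inr ⟨rfl, h1⟩), mk_lt.2 (Or.inl h), h.le⟩
  · obtain ⟨q, h1, h2, hq⟩ := exists_rat_gt r (y := s.1) hrs s.2.2.le
    exact ⟨a, q, hq, mk_lt.2 (Or.inr ⟨rfl, h1⟩), mk_lt.2 (Or.inr ⟨rfl, h2⟩), le_rfl⟩

instance : DenselyOrdered ClosedLongRay := ⟨fun _ _ h => by
  obtain ⟨a, q, -, h1, h2, -⟩ := exists_rat_between h
  exact ⟨_, h1, h2⟩⟩

instance : NoMaxOrder ClosedLongRay := ⟨fun x => by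
  obtain ⟨a, r, rfl⟩ := exists_mk x
  obtain ⟨b, hb⟩ := exists_gt a
  exact ⟨mk b z01, mk_lt.2 (Or.inl hb)⟩⟩

theorem exists_bot : ∃ b : ClosedLongRay, ∀ x, b ≤ x := by
  obtain ⟨m, hm⟩ : ∃ m : Omega1, ∀ a, m ≤ a :=
    ⟨WellFounded.min (wellFounded_lt (α := Omega1)) univ univ_nonempty,
      fun a => not_lt.1 (WellFounded.not_lt_min _ _ (mem_univ a))⟩
  refine ⟨mk m z01, fun x => ?_⟩
  obtain ⟨a, r, rfl⟩ := exists_mk x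
  rcases (hm a).lt_or_eq with h | h
  · exact mk_le.2 (Or.inl h)
  · exact mk_le.2 (Or.inr ⟨h, r.2.1⟩)

instance : OrderBot ClosedLongRay where
  bot := exists_bot.choose
  bot_le := exists_bot.choose_spec

theorem exists_lub (s : Set ClosedLongRay) (hb : BddAbove s) : ∃ a, IsLUB s a := by
  let T : Set Omega1 := {a | ∃ r, mk a r ∈ upperBounds s}
  have hT : T.Nonempty := by
    obtain ⟨x, hx⟩ := hb
    obtain ⟨a, r, rfl⟩ := exists_mk x
    exact ⟨a, r, hx⟩
  obtain ⟨α, ⟨r0, hr0⟩, hmin⟩ : ∃ α ∈ T, ∀ β ∈ T, α ≤ β :=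
    ⟨WellFounded.min (wellFounded_lt (α := Omega1)) T hT, WellFounded.min_mem _ _ _,
      fun a ha => not_lt.1 (WellFounded.not_lt_min _ _ ha)⟩
  let V : Set ℝ := {x | ∃ r : Set.Ico (0:ℝ) 1, r.1 = x ∧ mk α r ∈ upperBounds s}
  have hV0 : ∀ x ∈ V, 0 ≤ x := by rintro _ ⟨r, rfl, -⟩; exact r.2.1
  have hVb : BddBelow V := ⟨0, hV0⟩
  have hVr : r0.1 ∈ V := ⟨r0, rfl, hr0⟩
  let ρ : Set.Ico (0:ℝ) 1 :=
    ⟨sInf V, le_csInf ⟨_, hVr⟩ hV0, (csInf_le hVb hVr).trans_lt r0.2.2⟩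
  refine ⟨mk α ρ, ?_, ?_⟩
  · intro x hx
    have h1 := hr0 hx
    obtain ⟨β, q, rfl⟩ := exists_mk x
    rcases mk_le.1 h1 with h | ⟨rfl, -⟩
    · exact mk_le.2 (Or.inl h)
    · refine mk_le.2 (Or.inr ⟨rfl, ?_⟩)
      refine (le_csInf ⟨_, hVr⟩ ?_ : q.1 ≤ sInf V)
      rintro _ ⟨r, rfl, hr⟩
      rcases mk_le.1 (hr hx) with h | ⟨-, h⟩
      · exact absurd h (lt_irrefl _)
      · exact h
  · intro y hy
    obtain ⟨β, q, rfl⟩ := exists_mk y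
    rcases (hmin β ⟨q, hy⟩).lt_or_eq with h | h
    · exact mk_le.2 (Or.inl h)
    · subst h
      exact mk_le.2 (Or.inr ⟨rfl, (csInf_le hVb ⟨q, rfl, hy⟩ : sInf V ≤ q.1)⟩)

theorem longLike : LongLike ClosedLongRay where
  lub := fun s _ h => exists_lub s h
  bdd := fun u => by
    obtain ⟨b, hb⟩ := Omega1.bdd fun n => (ofLex (u n)).1
    obtain ⟨c, hc⟩ := exists_gt b
    refine ⟨mk c z01, ?_⟩
    rintro _ ⟨n, rfl⟩
    exact (mk_lt.2 (Or.inl ((hb n).trans_lt hc)) : mk (ofLex (u n)).1 (ofLex (u n)).2 < _).le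

open Classical in
instance : CompactIccSpace ClosedLongRay := by
  letI : SupSet ClosedLongRay := ⟨fun s => if h : BddAbove s then (exists_lub s h).choose else ⊥⟩
  letI I : ConditionallyCompleteLinearOrder ClosedLongRay :=
    { (inferInstance : LinearOrder ClosedLongRay),
      conditionallyCompleteLatticeOfLatticeOfsSup ClosedLongRay (fun s hb _ => by
        change IsLUB s (if h : BddAbove s then (exists_lub s h).choose else ⊥)
        rw [dif_pos hb]
        exact (exists_lub s hb).choose_spec) with
      csSup_of_not_bddAbove := by
        intro s hs
        change (if h : BddAbove s then (exists_lub s h).choose else ⊥) =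
          (if h : BddAbove (∅ : Set ClosedLongRay) then (exists_lub _ h).choose else ⊥)
        rw [dif_neg hs, dif_pos bddAbove_empty]
        exact ((isLUB_empty).unique (exists_lub _ bddAbove_empty).choose_spec)
      csInf_of_not_bddBelow := fun s hs => absurd (OrderBot.bddBelow s) hs }
  exact ConditionallyCompleteLinearOrder.toCompactIccSpace ClosedLongRay

instance : FirstCountableTopology ClosedLongRay := ⟨fun x => by
  obtain ⟨w, hw⟩ := exists_gt x
  let D : Set ClosedLongRay :=
    (fun z : Omega1 × Set.Ico (0:ℝ) 1 => mk z.1 z.2) ''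
      ((Iic (ofLex w).1) ×ˢ {q : Set.Ico (0:ℝ) 1 | ∃ p : ℚ, q.1 = (p : ℝ)})
  have hD : D.Countable := by
    refine ((Omega1.countable_Iic _).prod ?_).image _
    have := (countable_range (fun p : ℚ => (p : ℝ))).preimage
      (Subtype.val_injective (p := fun x => x ∈ Set.Ico (0:ℝ) 1))
    refine this.mono ?_
    rintro q ⟨p, hp⟩
    exact ⟨p, hp.symm⟩
  have hmono : ∀ y, y ≤ w → (ofLex y).1 ≤ (ofLex w).1 := by
    intro y hy
    obtain ⟨a, r, rfl⟩ := exists_mk y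
    obtain ⟨b, s, rfl⟩ := exists_mk w
    rcases mk_le.1 hy with h | ⟨h, -⟩
    · exact h.le
    · exact h.le
  have hbt : ∀ y z, y < z → z ≤ w → ∃ d ∈ D, y < d ∧ d < z := by
    intro y z h hz
    obtain ⟨a, q, hq, h1, h2, h3⟩ := exists_rat_between h
    exact ⟨mk a q, ⟨(a, q), ⟨h3.trans (hmono z hz), hq⟩, rfl⟩, h1, h2⟩
  have hc1 : Countable (D ∩ Iio x : Set ClosedLongRay) := (hD.mono inter_subset_left).to_subtype
  have hc2 : Countable (D ∩ Ioi x : Set ClosedLongRay) := (hD.mono inter_subset_left).to_subtype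
  have e : 𝓝 x = (⨅ l : (D ∩ Iio x : Set ClosedLongRay), 𝓟 (Ioi l.1)) ⊓
      (⨅ u : (D ∩ Ioi x : Set ClosedLongRay), 𝓟 (Iio u.1)) := by
    rw [nhds_eq_order]
    apply le_antisymm
    · refine inf_le_inf (le_iInf fun l => iInf₂_le l.1 l.2.2) (le_iInf fun l => iInf₂_le l.1 l.2.2)
    · refine inf_le_inf (le_iInf₂ fun l hl => ?_) (le_iInf₂ fun l hl => ?_)
      · obtain ⟨d, hd, h1, h2⟩ := hbt l x hl hw.le
        refine (iInf_le _ ⟨d, hd, h2⟩).trans (principal_mono.2 (Ioi_subset_Ioi h1.le))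
      · obtain ⟨d, hd, h1, h2⟩ := hbt x (min l w) (lt_min hl hw) (min_le_right _ _)
        refine (iInf_le _ ⟨d, hd, h1⟩).trans
          (principal_mono.2 (Iio_subset_Iio (h2.le.trans (min_le_left _ _))))
  rw [e]
  infer_instance⟩

end ClosedLongRay

namespace LongLine

/-- inclusion of the closed long ray -/
def inr (b : ClosedLongRay) : LongLine := toLex (Sum.inr b)

/-- inclusion of the negative part -/
def inl (a : LongRay) : LongLine := toLex (Sum.inl (OrderDual.toDual a))

theorem cases (x : LongLine) : (∃ a, x = inl a) ∨ ∃ b, x = inr b := by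
  rcases h : ofLex x with a | b
  · exact Or.inl ⟨OrderDual.ofDual a, h⟩
  · exact Or.inr ⟨b, h⟩

theorem inl_le_inl {a b : LongRay} : inl a ≤ inl b ↔ b.toCLR ≤ a.toCLR := Sum.Lex.inl_le_inl_iff
theorem inr_le_inr {a b} : inr a ≤ inr b ↔ a ≤ b := Sum.Lex.inr_le_inr_iff
theorem inl_le_inr (a b) : inl a ≤ inr b := (Sum.Lex.inl_lt_inr _ _).le
theorem not_inr_le_inl (a b) : ¬ inr a ≤ inl b := Sum.Lex.not_inr_le_inl

/-- positive part -/
def pos (x : LongLine) : ClosedLongRay :=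
  match ofLex x with
  | Sum.inl _ => ⊥
  | Sum.inr b => b

/-- negative part -/
def npart (x : LongLine) : ClosedLongRay :=
  match ofLex x with
  | Sum.inl a => (OrderDual.ofDual a).toCLR
  | Sum.inr _ => ⊥

@[simp] theorem pos_inl (a) : pos (inl a) = ⊥ := rfl
@[simp] theorem pos_inr (a) : pos (inr a) = a := rfl
@[simp] theorem npart_inl (a) : npart (inl a) = a.toCLR := rfl
@[simp] theorem npart_inr (a) : npart (inr a) = ⊥ := rfl
@[simp] theorem neg_inl (a) : neg (inl a) = inr a.toCLR := rfl
/-- constructor -/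
def _root_.LongRay.mk' (b : ClosedLongRay) (h : ∃ y, y < b) : LongRay := ⟨b, h⟩
@[simp] theorem toCLR_mk' (b h) : (LongRay.mk' b h).toCLR = b := rfl
theorem neg_inr_pos (b : ClosedLongRay) (h : ∃ y, y < b) : neg (inr b) = inl (LongRay.mk' b h) := dif_pos h
theorem neg_inr_bot : neg (inr ⊥) = inr ⊥ := dif_neg (by rintro ⟨y, hy⟩; exact not_lt_bot hy)

theorem neg_cases (b : ClosedLongRay) : (b = ⊥ ∧ neg (inr b) = inr ⊥) ∨
    ∃ h, ⊥ < b ∧ neg (inr b) = inl (LongRay.mk' b h) := by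
  rcases eq_bot_or_bot_lt b with rfl | h
  · exact Or.inl ⟨rfl, neg_inr_bot⟩
  · exact Or.inr ⟨⟨_, h⟩, h, neg_inr_pos _ _⟩

@[simp] theorem pos_neg_inr (b) : pos (neg (inr b)) = ⊥ := by
  rcases neg_cases b with ⟨_, e⟩ | ⟨h, _, e⟩ <;> rw [e] <;> simp
@[simp] theorem npart_neg_inr (b) : npart (neg (inr b)) = b := by
  rcases neg_cases b with ⟨rfl, e⟩ | ⟨h, _, e⟩ <;> rw [e] <;> simp

theorem pos_mono : Monotone pos := by
  intro x y h
  rcases cases x with ⟨a, rfl⟩ | ⟨a, rfl⟩ <;> rcases cases y with ⟨b, rfl⟩ | ⟨b, rfl⟩ <;> simp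
  · exact (not_inr_le_inl _ _ h).elim
  · exact inr_le_inr.1 h

theorem npart_anti : Antitone npart := by
  intro x y h
  rcases cases x with ⟨a, rfl⟩ | ⟨a, rfl⟩ <;> rcases cases y with ⟨b, rfl⟩ | ⟨b, rfl⟩ <;> simp
  · exact inl_le_inl.1 h
  · exact (not_inr_le_inl _ _ h).elim

theorem continuous_pos : Continuous pos :=
  pos_mono.continuous_of_surjective fun b => ⟨inr b, rfl⟩

theorem continuous_npart : Continuous npart :=
  Monotone.continuous_of_surjective (β := ClosedLongRayᵒᵈ) (f := OrderDual.toDual ∘ npart)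
    (fun _ _ h => npart_anti h) fun b => ⟨neg (inr (OrderDual.ofDual b)), npart_neg_inr _⟩

theorem continuous_inr : Continuous inr := by
  have h : StrictMono inr := Monotone.strictMono_of_injective (fun _ _ h => inr_le_inr.2 h)
    fun a b h => by simpa using congrArg pos h
  refine (h.isEmbedding_of_ordConnected ⟨?_⟩).continuous
  rintro _ ⟨a, rfl⟩ _ ⟨b, rfl⟩ x ⟨h1, h2⟩
  rcases cases x with ⟨c, rfl⟩ | ⟨c, rfl⟩
  · exact absurd h1 (not_inr_le_inl _ _)
  · exact ⟨c, rfl⟩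

theorem neg_inr_le (b) : neg (inr b) ≤ inr ⊥ := by
  rcases neg_cases b with ⟨_, e⟩ | ⟨h, _, e⟩ <;> rw [e]
  exact inl_le_inr _ _

theorem neg_inr_anti : Antitone fun b => neg (inr b) := by
  intro a b h
  rcases neg_cases a with ⟨_, e⟩ | ⟨ha, hpa, e⟩
  · simp only [e]; exact neg_inr_le b
  · rcases neg_cases b with ⟨rfl, e'⟩ | ⟨hb, _, e'⟩
    · exact absurd (hpa.trans_le h) (lt_irrefl _)
    · simp only [e, e']; exact inl_le_inl.2 h

theorem continuous_neg_inr : Continuous fun b => neg (inr b) := by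
  have h : StrictMono (fun b : ClosedLongRayᵒᵈ => neg (inr (OrderDual.ofDual b))) :=
    Monotone.strictMono_of_injective (fun _ _ h => neg_inr_anti h)
    fun a b h => by simpa using congrArg npart h
  refine (h.isEmbedding_of_ordConnected ⟨?_⟩).continuous
  rintro _ ⟨a, rfl⟩ _ ⟨b, rfl⟩ x ⟨h1, h2⟩
  rcases cases x with ⟨c, rfl⟩ | ⟨c, rfl⟩
  · exact ⟨c.toCLR, neg_inr_pos _ c.2⟩
  · have : c = ⊥ := le_bot_iff.1 (inr_le_inr.1 (h2.trans (neg_inr_le _)))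
    subst this
    exact ⟨OrderDual.toDual ⊥, neg_inr_bot⟩

theorem ext_parts {x y : LongLine} (h1 : pos x = pos y) (h2 : npart x = npart y) : x = y := by
  rcases cases x with ⟨a, rfl⟩ | ⟨a, rfl⟩ <;> rcases cases y with ⟨b, rfl⟩ | ⟨b, rfl⟩ <;>
    simp at h1 h2
  · rw [Subtype.ext h2]
  · obtain ⟨y, hy⟩ := a.2
    exact absurd (h2 ▸ hy : y < ⊥) not_lt_bot
  · obtain ⟨y, hy⟩ := b.2
    exact absurd (h2 ▸ hy : y < ⊥) not_lt_bot
  · rw [h1]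

theorem npart_of_pos {x : LongLine} (h : ⊥ < pos x) : npart x = ⊥ := by
  rcases cases x with ⟨a, rfl⟩ | ⟨a, rfl⟩ <;> simp at h ⊢

/-- Points of the rhombic quadrant. -/
theorem mem_rhomb {x y : LongLine} (h : neg y ≤ x ∧ x ≤ y) :
    y = inr (pos y) ∧ pos x ≤ pos y ∧ npart x ≤ pos y := by
  rcases cases y with ⟨a, rfl⟩ | ⟨b, rfl⟩
  · exact absurd (h.1.trans h.2) (not_inr_le_inl _ _)
  · refine ⟨rfl, pos_mono h.2, ?_⟩
    simpa using npart_anti h.1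

end LongLine

end ConcreteLong

/-- The rectangular quadrant `𝕃≥0 × 𝕃≥0` and the rhombic quadrant
`{(x, y) ∈ 𝕃² : -y ≤ x ≤ y}` are not homeomorphic. -/
theorem statement16 :
    IsEmpty ((ClosedLongRay × ClosedLongRay) ≃ₜ
      {z : LongLine × LongLine // LongLine.neg z.2 ≤ z.1 ∧ z.1 ≤ z.2}) := by
  refine ⟨fun h => ?_⟩
  have hle : ∀ t, LongLine.neg (LongLine.inr t) ≤ LongLine.inr t := fun t =>
    (LongLine.neg_inr_le t).trans (LongLine.inr_le_inr.2 bot_le)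
  refine ClosedLongRay.longLike.main h (fun z => LongLine.pos z.1.1) (fun z => LongLine.npart z.1.1)
    (fun z => LongLine.pos z.1.2) (fun t => ⟨(LongLine.inr t, LongLine.inr t), hle t, le_rfl⟩)
    (fun t => ⟨(LongLine.neg (LongLine.inr t), LongLine.inr t), le_rfl, hle t⟩)
    (LongLine.continuous_pos.comp (continuous_fst.comp continuous_subtype_val))
    (LongLine.continuous_npart.comp (continuous_fst.comp continuous_subtype_val))
    (LongLine.continuous_pos.comp (continuous_snd.comp continuous_subtype_val))
    ((LongLine.continuous_inr.prodMk LongLine.continuous_inr).subtype_mk _)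
    ((LongLine.continuous_neg_inr.prodMk LongLine.continuous_inr).subtype_mk _)
    ?_ (fun z => (LongLine.mem_rhomb z.2).2.1) (fun z => (LongLine.mem_rhomb z.2).2.2)
    (fun _ => rfl) (fun _ => rfl) (fun t => LongLine.npart_neg_inr t) (fun _ => rfl)
    (fun t => LongLine.pos_neg_inr t) ?_ ?_
  · rintro ⟨⟨x, y⟩, hz⟩ ⟨⟨x', y'⟩, hw⟩ h1 h2 h3
    have e1 := (LongLine.mem_rhomb hz).1
    have e2 := (LongLine.mem_rhomb hw).1
    refine Subtype.ext (Prod.ext (LongLine.ext_parts h1 h2) ?_)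
    change y = y'
    exact e1.trans ((congrArg LongLine.inr h3).trans e2.symm)
  · rintro ⟨⟨x, y⟩, hz⟩ h1
    obtain ⟨e1, e2, e3⟩ := LongLine.mem_rhomb hz
    change LongLine.pos x = LongLine.pos y at h1
    refine Subtype.ext (Prod.ext (LongLine.ext_parts h1 ?_) e1)
    change LongLine.npart x = ⊥
    rcases eq_bot_or_bot_lt (LongLine.pos x) with h | h
    · rw [← h1, h] at e3
      exact le_bot_iff.1 e3
    · exact LongLine.npart_of_pos h
  · rintro ⟨⟨x, y⟩, hz⟩ h1
    obtain ⟨e1, e2, e3⟩ := LongLine.mem_rhomb hz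
    change LongLine.npart x = LongLine.pos y at h1
    refine Subtype.ext (Prod.ext (LongLine.ext_parts ?_ ?_) e1)
    · change LongLine.pos x = LongLine.pos (LongLine.neg (LongLine.inr (LongLine.pos y)))
      rw [LongLine.pos_neg_inr]
      by_contra h
      have h' := bot_lt_iff_ne_bot.2 h
      have := LongLine.npart_of_pos h'
      rw [h1] at this
      rw [this] at e2
      exact h (le_bot_iff.1 e2)
    · change LongLine.npart x = LongLine.npart (LongLine.neg (LongLine.inr (LongLine.pos y)))
      rw [LongLine.npart_neg_inr, h1]
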